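/- Fix x ∈ V and a subset E₁ ⊆ E of directed boundary-to-interior edges. Then the expected number of visits to x under the discrete excursion measure equals the harmonic measure of rev(E₁) seen from x: Σ_ω n_x(ω) · 6^{−|ω|}, the sum over all excursions ω with entry edge in E₁, equals H_V(x, rev(E₁)), the probability that simple random walk on 𝕋 started at x first leaves V through an edge of rev(E₁). In particular, taking E₁ = E, Σ_ω n_x(ω) · 6^{−|ω|} = 1. -/

import Mathlib

/-!
Every visit of an excursion `ω` to `x` cuts `ω` at that visit into a piece `p` leading from an
edge of `E1` to `x` and a piece `s` leading from `x` out of `V`; conversely any two such pieces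
can be glued (`isExcursion_split`). The weight `6^{-|ω|}` is multiplicative under the cutting, so
the sum over excursions, counted with the number of visits, is the product of two sums
(`visit_sum_eq`). Reading `p` backwards turns the first factor into the harmonic measure of
`rev(E1)` seen from `x`. The second factor is the probability that simple random walk started at
`x` ever leaves `V`.

That probability is `1` because `V` is finite (`exitProb_eq_one`). The function `exitProb V` is
at most `1`, equals `1` off `V`, and has the mean value property on `V`. If `m` is its minimum on
`V` and `y` is a rightmost point of `V` where `m` is attained, then the mean value property gives
the value `m` at the neighbour of `y` to the right, which therefore lies outside `V`; hence
`m = 1`.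
-/


open scoped ENNReal

namespace MassiveHE

/-- Neighbour offsets of the triangular lattice realized on `ℤ²`. -/
def offsets : Finset (ℤ × ℤ) := {(1,0), (-1,0), (0,1), (0,-1), (1,-1), (-1,1)}

/-- Adjacency relation of the triangular lattice. -/
def Adj (p q : ℤ × ℤ) : Prop := (p.1 - q.1, p.2 - q.2) ∈ offsets

/-- Discrete boundary of `V`: vertices outside `V` adjacent to some vertex of `V`. -/
def bdry (V : Set (ℤ × ℤ)) : Set (ℤ × ℤ) :=
  {w | w ∉ V ∧ ∃ v ∈ V, Adj v w}

/-- The set `E` of directed edges from the boundary into the interior. -/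
def dirEdges (V : Set (ℤ × ℤ)) : Set ((ℤ × ℤ) × (ℤ × ℤ)) :=
  {e | e.1 ∈ bdry V ∧ e.2 ∈ V ∧ Adj e.1 e.2}

/-- Reversal of a set of directed edges. -/
def revEdges (E1 : Set ((ℤ × ℤ) × (ℤ × ℤ))) : Set ((ℤ × ℤ) × (ℤ × ℤ)) :=
  {e | (e.2, e.1) ∈ E1}

/-- An excursion whose entry edge lies in `E1`: it starts with an edge of `E1`, its
intermediate vertices lie in `V`, and its final vertex lies outside `V`. -/
def IsExcursion (V : Set (ℤ × ℤ)) (E1 : Set ((ℤ × ℤ) × (ℤ × ℤ)))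
    (l : List (ℤ × ℤ)) : Prop :=
  2 ≤ l.length ∧ l.Chain' Adj ∧
  (∃ a b, l.head? = some a ∧ l.tail.head? = some b ∧ (a, b) ∈ E1) ∧
  (∀ x ∈ l.tail.dropLast, x ∈ V) ∧
  (∃ z, l.getLast? = some z ∧ z ∉ V)

/-- A walk from `x` staying in `V` until it exits through an edge of `F`. -/
def IsExitVia (V : Set (ℤ × ℤ)) (F : Set ((ℤ × ℤ) × (ℤ × ℤ)))
    (x : ℤ × ℤ) (l : List (ℤ × ℤ)) : Prop :=
  l.head? = some x ∧ l.Chain' Adj ∧ (∀ y ∈ l.dropLast, y ∈ V) ∧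
  (∃ u z, l.dropLast.getLast? = some u ∧ l.getLast? = some z ∧ (u, z) ∈ F ∧ z ∉ V)

/-! ### Sums over lists -/

lemma tsum_list {α : Type*} (f : List α → ℝ≥0∞) :
    ∑' s, f s = f [] + ∑' z, ∑' s, f (z :: s) := by
  classical
  rw [ENNReal.tsum_eq_add_tsum_ite [], ← ENNReal.tsum_prod (f := fun z s => f (z :: s))]
  congr 1
  have hinj : Function.Injective (fun p : α × List α => p.1 :: p.2) := by
    rintro ⟨a, s⟩ ⟨b, t⟩ h
    simpa using h
  rw [← hinj.tsum_eq]
  · simp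
  · intro s hs
    cases s with
    | nil => simp at hs
    | cons a s => exact ⟨(a, s), rfl⟩

lemma count_eq_tsum {α : Type*} [BEq α] [LawfulBEq α] [DecidableEq (List α)] (x : α) (l : List α) :
    (l.count x : ℝ≥0∞) = ∑' p : List α, ∑' s : List α, if p ++ x :: s = l then 1 else 0 := by
  induction l with
  | nil => simp
  | cons a l ih =>
    rw [tsum_list, List.count_cons, Nat.cast_add, ih, add_comm]
    congr 1
    · by_cases h : a = x
      · simp [h]
      · simp [h, Ne.symm h]
    · rw [tsum_eq_single a]
      · simp
      · intro b hb
        simp [hb]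

open Classical in
lemma tsum_subtype_ite {α : Type*} (P : α → Prop) (f : α → ℝ≥0∞) :
    ∑' l : {l // P l}, f l.1 = ∑' l, if P l then f l else 0 := by
  refine (tsum_subtype {l | P l} f).trans (tsum_congr fun l => ?_)
  simp [Set.indicator_apply]

/-! ### The exit probability from a finite set -/

lemma Adj.symm {p q : ℤ × ℤ} (h : Adj p q) : Adj q p := by
  simp only [Adj, offsets, Finset.mem_insert, Finset.mem_singleton, Prod.mk.injEq] at h ⊢
  omega

lemma tsum_adj (y : ℤ × ℤ) (f : ℤ × ℤ → ℝ≥0∞) [DecidablePred (Adj y)] :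
    (∑' z, if Adj y z then f z else 0) = ∑ o ∈ offsets, f (y - o) := by
  rw [← (Equiv.subLeft y).tsum_eq, tsum_eq_sum (s := offsets)]
  · refine Finset.sum_congr rfl fun o ho => ?_
    have : Adj y (y - o) := by simpa [Adj] using ho
    simp [this]
  · intro o ho
    have : ¬ Adj y (y - o) := by simpa [Adj] using ho
    simp [this]

/-- The list `y :: s` is a path which stays in `V` up to its last vertex, and whose last vertex
lies outside `V`. For `y ∉ V` this forces `s = []`. -/
def Leaves (V : Set (ℤ × ℤ)) (y : ℤ × ℤ) (s : List (ℤ × ℤ)) : Prop :=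
  (y :: s).IsChain Adj ∧ (∀ v ∈ (y :: s).dropLast, v ∈ V) ∧ ∃ z, (y :: s).getLast? = some z ∧ z ∉ V

lemma leaves_nil (V : Set (ℤ × ℤ)) (y : ℤ × ℤ) : Leaves V y [] ↔ y ∉ V := by
  simp [Leaves]

lemma leaves_cons (V : Set (ℤ × ℤ)) (y z : ℤ × ℤ) (s : List (ℤ × ℤ)) :
    Leaves V y (z :: s) ↔ y ∈ V ∧ Adj y z ∧ Leaves V z s := by
  simp only [Leaves, List.isChain_cons_cons, List.dropLast_cons_cons, List.mem_cons,
    List.getLast?_cons_cons, forall_eq_or_imp]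
  tauto

open Classical in
/-- The weight `6^{-|s|}` of the path `y :: s` if it leaves `V` at its last step, else `0`. -/
noncomputable def exitWeight (V : Set (ℤ × ℤ)) (y : ℤ × ℤ) (s : List (ℤ × ℤ)) : ℝ≥0∞ :=
  if Leaves V y s then (1 / 6) ^ s.length else 0

/-- The probability that simple random walk started at `y` ever reaches the complement of `V`. -/
noncomputable def exitProb (V : Set (ℤ × ℤ)) (y : ℤ × ℤ) : ℝ≥0∞ := ∑' s, exitWeight V y s

open Classical in
lemma exitWeight_cons {V : Set (ℤ × ℤ)} {y : ℤ × ℤ} (hy : y ∈ V) (z : ℤ × ℤ)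
    (s : List (ℤ × ℤ)) :
    exitWeight V y (z :: s) = (if Adj y z then 1 / 6 else 0) * exitWeight V z s := by
  simp only [exitWeight, leaves_cons, hy, true_and, List.length_cons, pow_succ']
  by_cases h1 : Adj y z <;> by_cases h2 : Leaves V z s <;> simp [h1, h2]

lemma exitWeight_nil_of_mem {V : Set (ℤ × ℤ)} {y : ℤ × ℤ} (hy : y ∈ V) :
    exitWeight V y [] = 0 := by
  simp [exitWeight, leaves_nil, hy]

lemma exitWeight_of_notMem {V : Set (ℤ × ℤ)} {y : ℤ × ℤ} (hy : y ∉ V) (s : List (ℤ × ℤ)) :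
    exitWeight V y s = if s = [] then 1 else 0 := by
  cases s <;> simp [exitWeight, leaves_nil, leaves_cons, hy]

lemma exitProb_of_notMem {V : Set (ℤ × ℤ)} {y : ℤ × ℤ} (hy : y ∉ V) : exitProb V y = 1 := by
  simp [exitProb, exitWeight_of_notMem hy]

/-- The mean value property of the exit probability at points of `V`. -/
lemma exitProb_of_mem {V : Set (ℤ × ℤ)} {y : ℤ × ℤ} (hy : y ∈ V) :
    exitProb V y = ∑ o ∈ offsets, 1 / 6 * exitProb V (y - o) := by
  classical
  rw [← tsum_adj y (fun z => 1 / 6 * exitProb V z), exitProb, tsum_list,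
    exitWeight_nil_of_mem hy, zero_add]
  refine tsum_congr fun z => ?_
  simp_rw [exitWeight_cons hy, ENNReal.tsum_mul_left]
  rw [← exitProb]
  split_ifs <;> simp

lemma card_offsets : offsets.card = 6 := by decide

/-- The probability of having left `V` within `n` steps is at most `1`. -/
lemma tsum_truncated_le_one (V : Set (ℤ × ℤ)) (n : ℕ) (y : ℤ × ℤ) :
    (∑' s : List (ℤ × ℤ), if s.length ≤ n then exitWeight V y s else 0) ≤ 1 := by
  classical
  induction n generalizing y with
  | zero =>
    rw [tsum_eq_single []]
    · simp only [exitWeight]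
      split_ifs <;> simp
    · intro s hs
      simp [hs]
  | succ n ih =>
    by_cases hy : y ∈ V
    · rw [tsum_list]
      simp only [exitWeight_nil_of_mem hy, ite_self, zero_add, List.length_cons,
        Nat.add_le_add_iff_right]
      calc _ ≤ ∑' z, if Adj y z then (1 / 6 : ℝ≥0∞) else 0 := by
            refine ENNReal.tsum_le_tsum fun z => ?_
            calc _ = ∑' s : List (ℤ × ℤ), (if Adj y z then (1 / 6 : ℝ≥0∞) else 0) *
                      (if s.length ≤ n then exitWeight V z s else 0) := by
                    refine tsum_congr fun s => ?_
                    rw [exitWeight_cons hy, mul_ite, mul_zero]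
              _ ≤ _ := by
                    rw [ENNReal.tsum_mul_left]
                    exact mul_le_of_le_one_right' (ih z)
        _ = 1 := by
            rw [tsum_adj y (fun _ => 1 / 6), Finset.sum_const, card_offsets, nsmul_eq_mul]
            simpa using ENNReal.mul_inv_cancel (a := 6) (by norm_num) (by norm_num)
    · calc _ ≤ exitProb V y := by
            refine ENNReal.tsum_le_tsum fun s => ?_
            split_ifs <;> simp
        _ ≤ 1 := (exitProb_of_notMem hy).le

lemma exitProb_le_one (V : Set (ℤ × ℤ)) (y : ℤ × ℤ) : exitProb V y ≤ 1 := by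
  rw [exitProb, ENNReal.tsum_eq_iSup_sum]
  refine iSup_le fun A => le_trans ?_ (tsum_truncated_le_one V (A.sup List.length) y)
  refine le_trans (Finset.sum_le_sum fun s hs => ?_) (ENNReal.sum_le_tsum A)
  rw [if_pos (Finset.le_sup (f := List.length) hs)]

lemma exitProb_toReal_of_mem {V : Set (ℤ × ℤ)} {y : ℤ × ℤ} (hy : y ∈ V) :
    (exitProb V y).toReal = ∑ o ∈ offsets, 1 / 6 * (exitProb V (y - o)).toReal := by
  rw [exitProb_of_mem hy, ENNReal.toReal_sum]
  · simp
  · intro o _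
    exact ENNReal.mul_ne_top (by simp) (ne_top_of_le_ne_top (by simp) (exitProb_le_one V _))

/-- Simple random walk leaves a finite set almost surely. -/
lemma exitProb_eq_one {V : Set (ℤ × ℤ)} (hV : V.Finite) (x : ℤ × ℤ) : exitProb V x = 1 := by
  classical
  by_cases hx : x ∈ V
  swap
  · exact exitProb_of_notMem hx
  set h : ℤ × ℤ → ℝ := fun y => (exitProb V y).toReal with hh
  have hle : ∀ y, h y ≤ 1 := fun y => by
    simpa [hh] using ENNReal.toReal_mono (by simp) (exitProb_le_one V y)
  have hout : ∀ y, y ∉ V → h y = 1 := fun y hy => by simp [hh, exitProb_of_notMem hy]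
  obtain ⟨y₀, hy₀, hmin⟩ := hV.toFinset.exists_min_image h ⟨x, by simpa using hx⟩
  -- `y` is a rightmost minimiser of `h` on `V`
  obtain ⟨y, hy, hmax⟩ := (hV.toFinset.filter (fun y => h y = h y₀)).exists_max_image
    Prod.fst ⟨y₀, by simpa using hy₀⟩
  simp only [Finset.mem_filter, Set.Finite.mem_toFinset] at hy hmax hmin
  have hmin' : ∀ z, h y₀ ≤ h z := fun z => by
    by_cases hz : z ∈ V
    · exact hmin z hz
    · rw [hout z hz]
      exact hle _
  have hmean : h y = ∑ o ∈ offsets, 1 / 6 * h (y - o) := exitProb_toReal_of_mem hy.1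
  have hright : h (y - (-1, 0)) = h y₀ := by
    refine le_antisymm ?_ (hmin' _)
    by_contra! hlt
    have : ∑ o ∈ offsets, 1 / 6 * h y₀ < ∑ o ∈ offsets, 1 / 6 * h (y - o) := by
      refine Finset.sum_lt_sum (fun o _ => ?_) ⟨(-1, 0), by decide, ?_⟩
      · linarith [hmin' (y - o)]
      · linarith
    rw [Finset.sum_const, card_offsets, ← hmean, hy.2, nsmul_eq_mul] at this
    push_cast at this
    linarith
  have hnot : y - (-1, 0) ∉ V := fun hmem => by
    have := hmax _ ⟨hmem, hright⟩
    simp at this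
  have h1 : h y₀ = 1 := by rw [← hright, hout _ hnot]
  have hx1 : h x = 1 := le_antisymm (hle x) (h1 ▸ hmin' x)
  rwa [hh, ENNReal.toReal_eq_one_iff] at hx1

/-! ### Cutting an excursion at a visit -/

lemma isExitVia_rev_dirEdges {V : Set (ℤ × ℤ)} {x : ℤ × ℤ} (hx : x ∈ V) (s : List (ℤ × ℤ)) :
    IsExitVia V (revEdges (dirEdges V)) x (x :: s) ↔ Leaves V x s := by
  constructor
  · rintro ⟨-, hc, hV, u, z, -, hz, -, hzV⟩
    exact ⟨hc, hV, z, hz, hzV⟩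
  · rintro ⟨hc, hV, z, hz, hzV⟩
    refine ⟨rfl, hc, hV, ?_⟩
    rcases List.eq_nil_or_concat s with rfl | ⟨t, w, rfl⟩
    · simp only [List.getLast?_singleton, Option.some.injEq] at hz
      exact absurd (hz ▸ hx) hzV
    have hdrop : (x :: (t ++ [w])).dropLast = x :: t := by
      rw [← List.cons_append, List.dropLast_concat]
    have hlast : (x :: (t ++ [w])).getLast? = some w := by
      rw [← List.cons_append, List.getLast?_concat]
    rw [List.concat_eq_append] at *
    rw [hlast, Option.some.injEq] at hz
    subst hz
    rw [hdrop] at hV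
    obtain ⟨u, hu⟩ : ∃ u, (x :: t).getLast? = some u := ⟨_, List.getLast?_eq_some_getLast (by simp)⟩
    have huV : u ∈ V := hV u (List.mem_of_getLast? hu)
    have hadj : Adj u w := by
      rw [← List.cons_append, List.isChain_append] at hc
      exact hc.2.2 u hu w rfl
    exact ⟨u, w, by rw [hdrop, hu], hlast, ⟨⟨hzV, u, huV, hadj⟩, huV, hadj.symm⟩, hzV⟩

/-- A path through `x` is an excursion from `E1` iff the part before this visit, read backwards,
exits `V` from `x` through `rev(E1)`, and the part after it exits `V` from `x`. -/
lemma isExcursion_split {V : Set (ℤ × ℤ)} {E1 : Set ((ℤ × ℤ) × (ℤ × ℤ))} (hE1 : E1 ⊆ dirEdges V)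
    {x : ℤ × ℤ} (hx : x ∈ V) (p s : List (ℤ × ℤ)) :
    IsExcursion V E1 (p ++ x :: s) ↔
      IsExitVia V (revEdges E1) x (x :: p.reverse) ∧ Leaves V x s := by
  have hrev : ∀ l : List (ℤ × ℤ), l.reverse.IsChain Adj ↔ l.IsChain Adj := fun l => by
    rw [List.isChain_reverse]
    exact ⟨fun h => h.imp fun _ _ => Adj.symm, fun h => h.imp fun _ _ => Adj.symm⟩
  rcases p with _ | ⟨a, p⟩
  · -- an excursion does not start in `V`
    constructor
    · rintro ⟨-, -, ⟨a, b, ha, -, hab⟩, -⟩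
      simp only [List.nil_append, List.head?_cons, Option.some.injEq] at ha
      exact absurd (ha ▸ hx) (hE1 hab).1.1
    · rintro ⟨⟨-, -, -, u, z, hu, -⟩, -⟩
      simp at hu
  rcases List.eq_nil_or_concat s with rfl | ⟨s, z, rfl⟩
  · -- nor does it end in `V`
    constructor
    · rintro ⟨-, -, -, -, z, hz, hzV⟩
      simp only [List.getLast?_concat, Option.some.injEq] at hz
      exact absurd (hz ▸ hx) hzV
    · rintro ⟨-, h⟩
      exact absurd hx ((leaves_nil V x).1 h)
  rw [List.concat_eq_append]
  have e1 : (a :: p) ++ x :: (s ++ [z]) = a :: (p ++ x :: s) ++ [z] := by simp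
  have e2 : x :: (a :: p).reverse = (x :: p.reverse) ++ [a] := by simp
  have e3 : x :: (s ++ [z]) = (x :: s) ++ [z] := by simp
  have hchain : (a :: (p ++ x :: s) ++ [z]).IsChain Adj ↔
      ((x :: p.reverse) ++ [a]).IsChain Adj ∧ ((x :: s) ++ [z]).IsChain Adj := by
    rw [← e1, List.isChain_split, ← hrev]
    simp
  have hhead : (a :: (p ++ x :: s) ++ [z]).tail.head? = (x :: p.reverse).getLast? := by
    rw [← List.head?_reverse]
    cases p <;> simp
  have htail : (a :: (p ++ x :: s) ++ [z]).tail.dropLast = p ++ x :: s := by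
    rw [List.cons_append, List.tail_cons, List.dropLast_concat]
  rw [e1, e2]
  unfold IsExcursion IsExitVia Leaves
  rw [e3, htail, hhead]
  simp only [List.dropLast_concat, List.getLast?_concat]
  simp only [List.Chain', hchain, revEdges, Set.mem_ofPred_eq]
  constructor
  · rintro ⟨-, ⟨hc1, hc2⟩, ⟨a', b, ha, hb, hab⟩, hV, z', hz, hzV⟩
    simp only [List.cons_append, List.head?_cons, Option.some.injEq] at ha
    subst ha
    refine ⟨⟨by simp, hc1, ?_, b, a, hb, rfl, hab, (hE1 hab).1.1⟩, hc2, ?_, z', hz, hzV⟩ <;>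
    · intro v hv
      apply hV
      simp only [List.mem_cons, List.mem_reverse, List.mem_append] at hv ⊢
      tauto
  · rintro ⟨⟨-, hc1, hV1, u, a', hu, ha, hab, -⟩, hc2, hV2, z', hz, hzV⟩
    simp only [Option.some.injEq] at ha
    subst ha
    refine ⟨by simp; omega, ⟨hc1, hc2⟩, ⟨a, u, by simp, hu, hab⟩, fun v hv => ?_, z', hz, hzV⟩
    rw [List.mem_append] at hv
    rcases hv with hv | hv
    · exact hV1 v (by simp [hv])
    · exact hV2 v hv

open Classical in
lemma exitVia_sum_eq (V : Set (ℤ × ℤ)) (F : Set ((ℤ × ℤ) × (ℤ × ℤ))) (x : ℤ × ℤ) :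
    (∑' l : {l : List (ℤ × ℤ) // IsExitVia V F x l}, ((1 : ℝ≥0∞) / 6) ^ (l.1.length - 1))
      = ∑' s : List (ℤ × ℤ), if IsExitVia V F x (x :: s) then ((1 : ℝ≥0∞) / 6) ^ s.length else 0 := by
  rw [tsum_subtype_ite (IsExitVia V F x) (fun l => ((1 : ℝ≥0∞) / 6) ^ (l.length - 1)), tsum_list,
    if_neg (by simp [IsExitVia]), zero_add, tsum_eq_single x]
  · rfl
  · intro y hy
    simp [IsExitVia, hy]

/-- The expected number of visits to `x` factors into the harmonic measure of `rev(E1)` seen from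
`x` and the probability of ever leaving `V` from `x`. -/
lemma visit_sum_eq {V : Set (ℤ × ℤ)} {E1 : Set ((ℤ × ℤ) × (ℤ × ℤ))} (hE1 : E1 ⊆ dirEdges V)
    {x : ℤ × ℤ} (hx : x ∈ V) :
    (∑' l : {l : List (ℤ × ℤ) // IsExcursion V E1 l},
        (l.1.count x : ℝ≥0∞) * ((1 : ℝ≥0∞) / 6) ^ (l.1.length - 1))
      = (∑' l : {l : List (ℤ × ℤ) // IsExitVia V (revEdges E1) x l},
        ((1 : ℝ≥0∞) / 6) ^ (l.1.length - 1)) * exitProb V x := by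
  classical
  set g : List (ℤ × ℤ) → ℝ≥0∞ := fun l =>
    if IsExcursion V E1 l then ((1 : ℝ≥0∞) / 6) ^ (l.length - 1) else 0 with hg
  set q : List (ℤ × ℤ) → ℝ≥0∞ := fun s =>
    if IsExitVia V (revEdges E1) x (x :: s) then ((1 : ℝ≥0∞) / 6) ^ s.length else 0 with hq
  have hsplit : ∀ p s, g (p ++ x :: s) = q p.reverse * exitWeight V x s := fun p s => by
    have hlen : (p ++ x :: s).length - 1 = p.length + s.length := by simp [← add_assoc]
    simp only [hg, hq, exitWeight, isExcursion_split hE1 hx, hlen, pow_add, List.length_reverse]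
    by_cases h1 : IsExitVia V (revEdges E1) x (x :: p.reverse) <;>
      by_cases h2 : Leaves V x s <;> simp [h1, h2]
  calc _ = ∑' l : List (ℤ × ℤ), (l.count x : ℝ≥0∞) * g l := by
        rw [tsum_subtype_ite (IsExcursion V E1)
          (fun l => (l.count x : ℝ≥0∞) * ((1 : ℝ≥0∞) / 6) ^ (l.length - 1))]
        simp [hg]
    _ = ∑' l : List (ℤ × ℤ), ∑' p : List (ℤ × ℤ), ∑' s : List (ℤ × ℤ),
          if p ++ x :: s = l then g l else 0 := by
        refine tsum_congr fun l => ?_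
        rw [count_eq_tsum]
        simp_rw [← ENNReal.tsum_mul_right, ite_mul, one_mul, zero_mul]
    _ = ∑' p : List (ℤ × ℤ), ∑' s : List (ℤ × ℤ), g (p ++ x :: s) := by
        rw [ENNReal.tsum_comm]
        refine tsum_congr fun p => ?_
        rw [ENNReal.tsum_comm]
        refine tsum_congr fun s => ?_
        rw [tsum_eq_single (p ++ x :: s) (fun l hl => if_neg hl.symm), if_pos rfl]
    _ = (∑' p : List (ℤ × ℤ), q p.reverse) * exitProb V x := by
        simp_rw [hsplit, ENNReal.tsum_mul_left, ENNReal.tsum_mul_right, exitProb]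
    _ = (∑' p, q p) * exitProb V x := by
        congr 1
        exact Equiv.tsum_eq (Function.Involutive.toPerm _ List.reverse_involutive) q
    _ = _ := by rw [exitVia_sum_eq]

/-- Lemma 3.1 (discrete excursion-measure visit identity): the expected number of visits
to `x` under the excursion measure with entry edges in `E1` equals the harmonic measure
of `rev(E1)` seen from `x`; in particular for `E1 = E` it equals `1`. -/
theorem excursion_visit_identity
    (V : Set (ℤ × ℤ)) (hVfin : V.Finite) (hVne : V.Nonempty)
    (E1 : Set ((ℤ × ℤ) × (ℤ × ℤ))) (hE1 : E1 ⊆ dirEdges V)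
    (x : ℤ × ℤ) (hx : x ∈ V) :
    (∑' l : {l : List (ℤ × ℤ) // IsExcursion V E1 l},
        (l.1.count x : ℝ≥0∞) * ((1 : ℝ≥0∞) / 6) ^ (l.1.length - 1))
      = (∑' l : {l : List (ℤ × ℤ) // IsExitVia V (revEdges E1) x l},
        ((1 : ℝ≥0∞) / 6) ^ (l.1.length - 1)) ∧
    (∑' l : {l : List (ℤ × ℤ) // IsExcursion V (dirEdges V) l},
        (l.1.count x : ℝ≥0∞) * ((1 : ℝ≥0∞) / 6) ^ (l.1.length - 1)) = 1 := by
  classical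
  refine ⟨by rw [visit_sum_eq hE1 hx, exitProb_eq_one hVfin, mul_one], ?_⟩
  rw [visit_sum_eq subset_rfl hx, exitVia_sum_eq]
  have hexit : (∑' s : List (ℤ × ℤ), if IsExitVia V (revEdges (dirEdges V)) x (x :: s) then
      ((1 : ℝ≥0∞) / 6) ^ s.length else 0) = exitProb V x :=
    tsum_congr fun s => if_congr (isExitVia_rev_dirEdges hx s) rfl rfl
  rw [hexit, exitProb_eq_one hVfin, mul_one]

end MassiveHE
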